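/- For every quasi-poset P on [n], ehr_P(X) = Σ_{~ ◁ P} (μ_{P/~} / cl(~)!) · (Π_{C an equivalence class of ~} ehr'_{P|C}(0)) · X^{cl(~)}, where the sum ranges over all P-compatible equivalence relations ~ on Fin n, ehr'_{P|C}(0) denotes the value at 0 of the derivative of the polynomial ehr_{P|C} of the restriction of P to the class C, and μ_{P/~} is the number of heap-orderings of the quasi-poset P/~. -/

import Mathlib

open Polynomial

/-- The quotient quasi-order `≤_{P/~}`: the transitive (here reflexive-transitive)
closure of (`i ≤_P j` or `i ~ j`). -/
def quotLe {n : ℕ} (le r : Fin n → Fin n → Prop) : Fin n → Fin n → Prop :=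
  Relation.ReflTransGen (fun i j => le i j ∨ r i j)

/-- `~ ◁ P`: the equivalence relation `r` is `P`-compatible, i.e. its classes are
`P`-connected and `i ≤_{P/~} j` together with `j ≤_{P/~} i` imply `i ~ j`. -/
def Compat {n : ℕ} (le r : Fin n → Fin n → Prop) : Prop :=
  (∀ x y, r x y →
    Relation.ReflTransGen (fun a b => r a x ∧ r b x ∧ (le a b ∨ le b a)) x y) ∧
  (∀ i j, quotLe le r i j → quotLe le r j i → r i j)

/-- The number of equivalence classes of a relation. -/
noncomputable def clRel {n : ℕ} (r : Fin n → Fin n → Prop) : ℕ :=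
  Nat.card (Quot r)

/-- `cl(Q)` for a quasi-poset `Q`. -/
noncomputable def clQP {n : ℕ} (le : Fin n → Fin n → Prop) : ℕ :=
  clRel (fun i j => le i j ∧ le j i)

/-- `μ_Q`: the number of heap-orderings of the quasi-poset `Q`, i.e. maps
`f : Fin n → Fin (cl Q)` with `i ≤_Q j → f i ≤ f j` and `f i = f j ↔ i ~_Q j`. -/
noncomputable def heapCount {n : ℕ} (le : Fin n → Fin n → Prop) : ℕ :=
  Nat.card {f : Fin n → Fin (clQP le) //
    (∀ i j, le i j → f i ≤ f j) ∧ (∀ i j, f i = f j ↔ (le i j ∧ le j i))}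

/-- Number of monotone maps `Fin n → Fin k` (the set `L_P(k)`). -/
noncomputable def LCount {n : ℕ} (le : Fin n → Fin n → Prop) (k : ℕ) : ℕ :=
  Nat.card {f : Fin n → Fin k // ∀ i j, le i j → f i ≤ f j}

/-- Number of monotone maps `B → Fin k` for the restriction of `le` to `B`. -/
noncomputable def LCountOn {n : ℕ} (le : Fin n → Fin n → Prop) (B : Set (Fin n))
    (k : ℕ) : ℕ :=
  Nat.card {f : B → Fin k // ∀ i j : B, le i.1 j.1 → f i ≤ f j}

/-!
A map into the lexicographic product `Fin k ×ₗ Fin m`, which is `Fin (k * m)` as an ordered set, is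
monotone iff its first coordinate `g` is monotone and its second coordinate is monotone on the
connected components of the fibres of `g`. These components are the classes of a `P`-compatible
equivalence relation, so, sorting the maps `g` by this relation,
`ehr_P (k * m) = ∑_{~ ◁ P} S_~(k) * ∏_C ehr_{P|C}(m)`,
where `S_~(k)` counts the monotone `g` with fibre components `~`. As a function of `k`, `S_~` is a
polynomial of degree at most `cl(~)` whose coefficient of degree `cl(~)` is `μ_{P/~} / cl(~)!`; as a
function of `m`, the product is divisible by `m ^ cl(~)`, and its coefficient of that degree is
`∏_C ehr'_{P|C}(0)`. On the left only the monomials `k ^ d * m ^ d` occur, and comparing their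
coefficients gives the formula.
-/

open Function Relation

section Polynomials

variable {K : Type*}

theorem eq_of_forall_eval_natCast_eq [CommRing K] [IsDomain K] [CharZero K] {p q : K[X]}
    (h : ∀ k : ℕ, p.eval (k : K) = q.eval (k : K)) : p = q :=
  eq_of_infinite_eval_eq p q <|
    (Set.infinite_range_of_injective Nat.cast_injective).mono <| Set.range_subset_iff.2 h

theorem coeff_eq_sum_of_eval_natCast_mul [CommRing K] [IsDomain K] [CharZero K] {ι : Type*}
    (s : Finset ι) (p : K[X]) (S P : ι → K[X])
    (h : ∀ k m : ℕ, p.eval ((k * m : ℕ) : K) = ∑ i ∈ s, (S i).eval (k : K) * (P i).eval (m : K))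
    (d : ℕ) : p.coeff d = ∑ i ∈ s, (S i).coeff d * (P i).coeff d := by
  have expand_left (m : ℕ) : p.comp (C (m : K) * X) = ∑ i ∈ s, C ((P i).eval (m : K)) * S i :=
    eq_of_forall_eval_natCast_eq fun k => by
      simpa [eval_finsetSum, mul_comm] using h k m
  have expand_right : C (p.coeff d) * X ^ d = ∑ i ∈ s, P i * C ((S i).coeff d) :=
    eq_of_forall_eval_natCast_eq fun m => by
      have := congrArg (coeff · d) (expand_left m)
      simp only [comp_C_mul_X_coeff, finsetSum_coeff, coeff_C_mul] at this
      simp only [eval_mul, eval_C, eval_pow, eval_X, eval_finsetSum, this]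
  simpa [finsetSum_coeff, mul_comm ((P _).coeff d)] using congrArg (coeff · d) expand_right

theorem eq_sum_C_mul_X_pow_of_eval_natCast_mul [CommRing K] [IsDomain K] [CharZero K] {ι : Type*}
    (s : Finset ι) (p : K[X]) (S P : ι → K[X]) (N : ι → ℕ)
    (h : ∀ k m : ℕ, p.eval ((k * m : ℕ) : K) = ∑ i ∈ s, (S i).eval (k : K) * (P i).eval (m : K))
    (hS : ∀ i ∈ s, (S i).natDegree ≤ N i) (hP : ∀ i ∈ s, X ^ N i ∣ P i) :
    p = ∑ i ∈ s, C ((S i).coeff (N i) * (P i).coeff (N i)) * X ^ N i := by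
  ext d
  rw [coeff_eq_sum_of_eval_natCast_mul s p S P h, finsetSum_coeff]
  refine Finset.sum_congr rfl fun i hi => ?_
  rw [coeff_C_mul_X_pow]
  rcases lt_trichotomy d (N i) with hlt | rfl | hgt
  · rw [if_neg hlt.ne, X_pow_dvd_iff.1 (hP i hi) d hlt, mul_zero]
  · rw [if_pos rfl]
  · rw [if_neg hgt.ne', coeff_eq_zero_of_natDegree_lt ((hS i hi).trans_lt hgt), zero_mul]

theorem X_pow_card_dvd_finprod [CommSemiring K] {ι : Type*} [Finite ι] {F : ι → K[X]}
    (hF : ∀ i, X ∣ F i) : X ^ Nat.card ι ∣ ∏ᶠ i, F i := by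
  have := Fintype.ofFinite ι
  rw [finprod_eq_prod_of_fintype, Nat.card_eq_fintype_card, ← Finset.card_univ,
    ← Finset.prod_const]
  exact Finset.prod_dvd_prod_of_dvd _ _ fun i _ => hF i

theorem coeff_card_finprod [CommSemiring K] {ι : Type*} [Finite ι] {F : ι → K[X]}
    (hF : ∀ i, X ∣ F i) :
    (∏ᶠ i, F i).coeff (Nat.card ι) = ∏ᶠ i, (derivative (F i)).eval 0 := by
  have := Fintype.ofFinite ι
  choose G hG using hF
  simp_rw [finprod_eq_prod_of_fintype, hG, Finset.prod_mul_distrib, Finset.prod_const,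
    Finset.card_univ, Nat.card_eq_fintype_card]
  simp [coeff_X_pow_mul', coeff_zero_eq_eval_zero, eval_prod]

section NewtonPoly

variable [Field K] (c : ℕ → K) (N : ℕ)

/-- The polynomial `∑ j ≤ N, c j * (X choose j)`, interpolating a function on `ℕ` from the
coefficients `c` of its Newton expansion; the binomial coefficient `X choose j` is encoded as
`descPochhammer K j` divided by `j!`. -/
noncomputable def newtonPoly : K[X] :=
  ∑ j ∈ Finset.range (N + 1), C (c j / j.factorial) * descPochhammer K j

theorem newtonPoly_eval_natCast [CharZero K] (hc : ∀ j, N < j → c j = 0) (k : ℕ) :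
    (newtonPoly c N).eval (k : K) = ∑ j ∈ Finset.range (k + 1), k.choose j * c j := by
  have eval_term (j : ℕ) :
      (C (c j / j.factorial) * descPochhammer K j).eval (k : K) = k.choose j * c j := by
    have : (j.factorial : K) ≠ 0 := Nat.cast_ne_zero.2 j.factorial_ne_zero
    rw [eval_mul, eval_C, descPochhammer_eval_eq_descFactorial,
      Nat.descFactorial_eq_factorial_mul_choose, Nat.cast_mul]
    field_simp
  simp only [newtonPoly, eval_finsetSum, eval_term]
  rcases le_total N k with h | h
  · refine (Finset.eventually_constant_sum (fun j hj => ?_) (by lia)).symm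
    rw [hc j hj, mul_zero]
  · refine Finset.eventually_constant_sum (fun j hj => ?_) (by lia)
    rw [Nat.choose_eq_zero_of_lt hj, Nat.cast_zero, zero_mul]

theorem natDegree_newtonPoly_le : (newtonPoly c N).natDegree ≤ N :=
  natDegree_sum_le_of_forall_le _ _ fun j hj =>
    (natDegree_C_mul_le _ _).trans <|
      (descPochhammer_natDegree K j).trans_le (Finset.mem_range_succ_iff.1 hj)

theorem coeff_newtonPoly_self : (newtonPoly c N).coeff N = c N / N.factorial := by
  have coeff_lower : ∀ j ∈ Finset.range N,
      (C (c j / j.factorial) * descPochhammer K j).coeff N = 0 := fun j hj => by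
    rw [coeff_C_mul, coeff_eq_zero_of_natDegree_lt
      ((descPochhammer_natDegree K j).trans_lt (Finset.mem_range.1 hj)), mul_zero]
  have coeff_top : (descPochhammer K N).coeff N = 1 := by
    simpa only [Monic, leadingCoeff, descPochhammer_natDegree] using monic_descPochhammer K N
  rw [newtonPoly, finsetSum_coeff, Finset.sum_range_succ, Finset.sum_eq_zero coeff_lower,
    zero_add, coeff_C_mul, coeff_top, mul_one]

end NewtonPoly

end Polynomials

section Surjections

theorem card_range_eq_finset {V : Type*} (A : ∀ {k : ℕ}, (V → Fin k) → Prop)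
    (hA : ∀ {k l : ℕ} (e : Fin k ↪o Fin l) (g : V → Fin k), A (e ∘ g) ↔ A g)
    {k : ℕ} (s : Finset (Fin k)) :
    Nat.card {g : {g : V → Fin k // A g} // Set.range g.1 = s} =
      Nat.card {g : V → Fin s.card // A g ∧ Surjective g} := by
  let e := s.orderEmbOfFin rfl
  have range_e : Set.range e = s := s.range_orderEmbOfFin rfl
  have surjective_of_range_eq {g : V → Fin s.card} (h : Set.range (e ∘ g) = s) : Surjective g :=
    fun y => by
      obtain ⟨x, hx⟩ := (h.trans range_e.symm).superset ⟨y, rfl⟩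
      exact ⟨x, e.injective hx⟩
  refine (Nat.card_eq_of_bijective (fun g => ⟨⟨e ∘ g.1, (hA e g.1).2 g.2.1⟩,
    (g.2.2.range_comp e).trans range_e⟩) ⟨fun g g' h => ?_, ?_⟩).symm
  · exact Subtype.ext <| e.injective.comp_left <| congrArg (fun f => f.1.1) h
  · rintro ⟨⟨f, hf⟩, range_f⟩
    obtain ⟨g, rfl⟩ := Set.range_subset_range_iff_exists_comp.1 (range_f.trans range_e.symm).subset
    exact ⟨⟨g, (hA e g).1 hf, surjective_of_range_eq range_f⟩, rfl⟩

theorem card_eq_sum_choose_mul_card_surjective {V : Type*} [Finite V]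
    (A : ∀ {k : ℕ}, (V → Fin k) → Prop)
    (hA : ∀ {k l : ℕ} (e : Fin k ↪o Fin l) (g : V → Fin k), A (e ∘ g) ↔ A g) (k : ℕ) :
    Nat.card {g : V → Fin k // A g} =
      ∑ j ∈ Finset.range (k + 1), k.choose j * Nat.card {g : V → Fin j // A g ∧ Surjective g} := by
  let image (g : {g : V → Fin k // A g}) : Finset (Fin k) := (Set.finite_range g.1).toFinset
  calc Nat.card {g : V → Fin k // A g}
    _ = ∑ s : Finset (Fin k), Nat.card {g // image g = s} :=
      (Nat.card_congr (Equiv.sigmaFiberEquiv image).symm).trans Nat.card_sigma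
    _ = ∑ s : Finset (Fin k), Nat.card {g : V → Fin s.card // A g ∧ Surjective g} := by
      refine Finset.sum_congr rfl fun s _ => ?_
      rw [← card_range_eq_finset A hA]
      simp only [image, ← Finset.coe_inj, Set.Finite.coe_toFinset]
    _ = _ := by
      simpa only [Finset.powerset_univ, Finset.card_univ, Fintype.card_fin, smul_eq_mul] using
        Finset.sum_powerset_apply_card (x := (Finset.univ : Finset (Fin k)))
          fun j => Nat.card {g : V → Fin j // A g ∧ Surjective g}

theorem surjective_iff_forall_eq_imp_rel {V α : Type*} [Finite V] [Finite α] {r : V → V → Prop}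
    (hr : Equivalence r) (hcard : Nat.card (Quot r) = Nat.card α) {f : V → α}
    (hf : ∀ i j, r i j → f i = f j) : Surjective f ↔ ∀ i j, f i = f j → r i j := by
  have injective_lift : Injective (Quot.lift f hf) ↔ ∀ i j, f i = f j → r i j := by
    refine ⟨fun h i j hij => (hr.quot_mk_eq_iff i j).1 (h hij), ?_⟩
    rintro h ⟨i⟩ ⟨j⟩ hij
    exact Quot.sound (h i j hij)
  rw [← Quot.surjective_lift hf, ← injective_lift]
  exact ⟨fun h => ((Nat.bijective_iff_surjective_and_card _).2 ⟨h, hcard⟩).1,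
    fun h => ((Nat.bijective_iff_injective_and_card _).2 ⟨h, hcard⟩).2⟩

end Surjections

section FiberRel

variable {V α β : Type*} {R r : V → V → Prop} {g : V → α}

/-- The equivalence relation whose classes are the `R`-connected components of the fibres of `g`. -/
def fiberRel (R : V → V → Prop) (g : V → α) : V → V → Prop :=
  EqvGen fun i j => R i j ∧ g i = g j

theorem fiberRel_equivalence (R : V → V → Prop) (g : V → α) : Equivalence (fiberRel R g) :=
  EqvGen.is_equivalence _

theorem fiberRel_of_rel {i j : V} (h : R i j) (hg : g i = g j) : fiberRel R g i j :=
  .rel _ _ ⟨h, hg⟩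

theorem eq_of_fiberRel {i j : V} (h : fiberRel R g i j) : g i = g j :=
  (Setoid.ker g).iseqv.eqvGen_iff.1 (h.mono (fun _ _ h => h.2) _ _)

theorem fiberRel_comp_of_injective {e : α → β} (he : Injective e) :
    fiberRel R (e ∘ g) = fiberRel R g := by
  simp only [fiberRel, comp_apply, he.eq_iff]

theorem fiberRel_connected {i j : V} (h : fiberRel R g i j) :
    ReflTransGen (fun a b => fiberRel R g a i ∧ fiberRel R g b i ∧ (R a b ∨ R b a)) i j := by
  have hE := fiberRel_equivalence R g
  rw [fiberRel, ← EqvGen.reflTransGen_symmGen] at h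
  have mem_class {a : V} (ha : ReflTransGen (SymmGen fun i j => R i j ∧ g i = g j) i a) :
      fiberRel R g a i := hE.symm ((EqvGen.reflTransGen_symmGen _).le _ _ ha)
  induction h with
  | refl => exact .refl
  | tail hia hab ih =>
    exact ih.tail ⟨mem_class hia, mem_class (hia.tail hab), hab.imp And.left And.left⟩

/-- `g` is monotone for `R` and `r` is the relation cut out by the connected components of its
fibres. For fixed `r` these are the maps counted by `S_r` in the sorting of monotone maps. -/
structure IsAdapted [LE α] (R r : V → V → Prop) (g : V → α) : Prop where
  monotone : ∀ i j, R i j → g i ≤ g j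
  fiberRel_eq : fiberRel R g = r

theorem IsAdapted.eq_of_rel [LE α] (hg : IsAdapted R r g) {i j : V} (h : r i j) : g i = g j :=
  eq_of_fiberRel (hg.fiberRel_eq ▸ h)

theorem isAdapted_orderEmbedding_comp_iff [PartialOrder α] [Preorder β] (e : α ↪o β) :
    IsAdapted R r (e ∘ g) ↔ IsAdapted R r g := by
  constructor <;> rintro ⟨hmono, rfl⟩
  · exact ⟨fun i j h => e.le_iff_le.1 (hmono i j h), (fiberRel_comp_of_injective e.injective).symm⟩
  · exact ⟨fun i j h => e.le_iff_le.2 (hmono i j h), fiberRel_comp_of_injective e.injective⟩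

theorem IsAdapted.card_le [LE α] [Finite V] (hg : IsAdapted R r g) (hsurj : Surjective g) :
    Nat.card α ≤ Nat.card (Quot r) :=
  Nat.card_le_card_of_surjective (Quot.lift g fun _ _ => hg.eq_of_rel)
    ((Quot.surjective_lift _).2 hsurj)

end FiberRel

section Classes

variable {V β : Type*} {r : V → V → Prop}

/-- A map that is `R`-monotone on each class of `r` is a family of monotone maps, one for each
class. -/
def monotoneOnClassesEquiv [Preorder β] (R : V → V → Prop) (hr : Equivalence r) :
    {h : V → β // ∀ i j, R i j → r i j → h i ≤ h j} ≃
      ∀ c : Quot r, {f : {x | Quot.mk r x = c} → β // ∀ i j, R i.1 j.1 → f i ≤ f j} where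
  toFun h c := ⟨fun x => h.1 x, fun i j hij =>
    h.2 _ _ hij ((hr.quot_mk_eq_iff _ _).1 (i.2.trans j.2.symm))⟩
  invFun H := ⟨fun x => (H (Quot.mk r x)).1 ⟨x, rfl⟩, fun i j hR hij => by
    have restrict_eq (c : Quot r) (hc : Quot.mk r i = c) :
        (H (Quot.mk r i)).1 ⟨i, rfl⟩ = (H c).1 ⟨i, hc⟩ := by subst hc; rfl
    exact (restrict_eq _ (Quot.sound hij)).trans_le
      ((H (Quot.mk r j)).2 ⟨i, Quot.sound hij⟩ ⟨j, rfl⟩ hR)⟩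
  left_inv _ := rfl
  right_inv H := by
    ext c ⟨x, rfl⟩
    rfl

end Classes

section Compat

variable {n : ℕ} {R r : Fin n → Fin n → Prop} {α β : Type*}

theorem le_of_quotLe [Preorder α] {g : Fin n → α} (hmono : ∀ i j, R i j → g i ≤ g j)
    (hr : ∀ i j, r i j → g i = g j) {i j : Fin n} (h : quotLe R r i j) : g i ≤ g j := by
  induction h with
  | refl => rfl
  | tail _ hstep ih => exact ih.trans (hstep.elim (hmono _ _) fun h => (hr _ _ h).le)

theorem fiberRel_of_quotLe [PartialOrder α] {g : Fin n → α} (hmono : ∀ i j, R i j → g i ≤ g j)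
    {i j : Fin n} (h : quotLe R (fiberRel R g) i j) (hle : g j ≤ g i) : fiberRel R g i j := by
  have hE := fiberRel_equivalence R g
  induction h with
  | refl => exact hE.refl i
  | @tail a b hia hab ih =>
    have le_of_chain {x y : Fin n} (h : quotLe R (fiberRel R g) x y) : g x ≤ g y :=
      le_of_quotLe hmono (fun _ _ => eq_of_fiberRel) h
    have hga : g a ≤ g b := le_of_chain (.single hab)
    refine hE.trans (ih (hga.trans hle)) (hab.elim (fun hR => ?_) id)
    exact fiberRel_of_rel hR (hga.antisymm (hle.trans (le_of_chain hia)))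

theorem compat_fiberRel [PartialOrder α] {g : Fin n → α} (hmono : ∀ i j, R i j → g i ≤ g j) :
    Compat R (fiberRel R g) :=
  ⟨fun _ _ => fiberRel_connected, fun _ _ hij hji =>
    fiberRel_of_quotLe hmono hij (le_of_quotLe hmono (fun _ _ => eq_of_fiberRel) hji)⟩

theorem Compat.quotLe_and_quotLe_iff (hc : Compat R r) (hr : Equivalence r) {i j : Fin n} :
    quotLe R r i j ∧ quotLe R r j i ↔ r i j :=
  ⟨fun h => hc.2 _ _ h.1 h.2, fun h => ⟨.single (.inr h), .single (.inr (hr.symm h))⟩⟩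

theorem Compat.isAdapted [LE α] {g : Fin n → α} (hc : Compat R r) (hr : Equivalence r)
    (hmono : ∀ i j, R i j → g i ≤ g j) (hker : ∀ i j, g i = g j ↔ r i j) : IsAdapted R r g := by
  refine ⟨hmono, funext₂ fun i j => propext ⟨fun h => (hker i j).1 (eq_of_fiberRel h), fun h => ?_⟩⟩
  rw [fiberRel, ← EqvGen.reflTransGen_symmGen]
  refine ReflTransGen.mono (fun a b ⟨hai, hbi, hab⟩ => ?_) _ _ (hc.1 i j h)
  have hgab : g a = g b := (hker a b).2 (hr.trans hai (hr.symm hbi))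
  exact hab.imp (⟨·, hgab⟩) (⟨·, hgab.symm⟩)

theorem Compat.isHeapOrdering_iff [Preorder α] [Finite α] {f : Fin n → α} (hc : Compat R r)
    (hr : Equivalence r) (hcard : clRel r = Nat.card α) :
    ((∀ i j, quotLe R r i j → f i ≤ f j) ∧
        ∀ i j, f i = f j ↔ quotLe R r i j ∧ quotLe R r j i) ↔
      IsAdapted R r f ∧ Surjective f := by
  simp only [hc.quotLe_and_quotLe_iff hr]
  constructor
  · rintro ⟨hmono, hker⟩
    exact ⟨hc.isAdapted hr (fun i j h => hmono i j (.single (.inl h))) hker,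
      (surjective_iff_forall_eq_imp_rel hr hcard fun i j => (hker i j).2).2 fun i j =>
        (hker i j).1⟩
  · rintro ⟨hf, hsurj⟩
    have hr_eq : ∀ i j, r i j → f i = f j := fun _ _ => hf.eq_of_rel
    exact ⟨fun _ _ => le_of_quotLe hf.monotone hr_eq, fun i j =>
      ⟨(surjective_iff_forall_eq_imp_rel hr hcard hr_eq).1 hsurj i j, hr_eq i j⟩⟩

theorem heapCount_quotLe (hc : Compat R r) (hr : Equivalence r) :
    heapCount (quotLe R r) =
      Nat.card {f : Fin n → Fin (clRel r) // IsAdapted R r f ∧ Surjective f} := by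
  have clQP_eq : clQP (quotLe R r) = clRel r := by
    simp only [clQP, hc.quotLe_and_quotLe_iff hr]
  rw [heapCount, clQP_eq]
  exact Nat.card_congr <| Equiv.subtypeEquivRight fun f => hc.isHeapOrdering_iff hr (by simp)

/-- The set of `R`-compatible equivalence relations, over which the expansion of the Ehrhart
polynomial is a sum. -/
abbrev CompatRel (R : Fin n → Fin n → Prop) : Type :=
  {r : Fin n → Fin n → Prop // Equivalence r ∧ Compat R r}

/-- Monotone maps into a lexicographic product, sorted by the fibre components of their first
coordinate. -/
def monotoneLexEquiv [PartialOrder α] [Preorder β] (R : Fin n → Fin n → Prop) :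
    {f : Fin n → α ×ₗ β // ∀ i j, R i j → f i ≤ f j} ≃
      Σ r : CompatRel R,
        {g : Fin n → α // IsAdapted R r.1 g} ×
          {h : Fin n → β // ∀ i j, R i j → r.1 i j → h i ≤ h j} where
  toFun f :=
    have hmono (i j) (hij : R i j) := Prod.Lex.le_iff'.1 (f.2 i j hij)
    ⟨⟨fiberRel R fun i => (ofLex (f.1 i)).1,
      fiberRel_equivalence _ _, compat_fiberRel fun i j hij => (hmono i j hij).1⟩,
      ⟨fun i => (ofLex (f.1 i)).1, fun i j hij => (hmono i j hij).1, rfl⟩,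
      ⟨fun i => (ofLex (f.1 i)).2, fun i j hij hr =>
        (hmono i j hij).2 (eq_of_fiberRel (g := fun i => (ofLex (f.1 i)).1) hr)⟩⟩
  invFun q := ⟨fun i => toLex (q.2.1.1 i, q.2.2.1 i), fun i j hij => Prod.Lex.toLex_le_toLex'.2
    ⟨q.2.1.2.monotone i j hij, fun heq =>
      q.2.2.2 i j hij (q.2.1.2.fiberRel_eq ▸ fiberRel_of_rel hij heq)⟩⟩
  left_inv _ := rfl
  right_inv := by
    rintro ⟨⟨r, _⟩, ⟨g, hg⟩, h⟩
    obtain rfl : fiberRel R g = r := hg.fiberRel_eq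
    rfl

theorem LCount_mul (R : Fin n → Fin n → Prop) [Fintype (CompatRel R)] (k m : ℕ) :
    LCount R (k * m) = ∑ r : CompatRel R,
      Nat.card {g : Fin n → Fin k // IsAdapted R r.1 g} *
        ∏ᶠ c : Quot r.1, LCountOn R {x | Quot.mk r.1 x = c} m := by
  let e : Fin (k * m) ≃o Fin k ×ₗ Fin m :=
    Fintype.orderIsoFinOfCardEq (Fin k ×ₗ Fin m) (by simp [Fintype.card_lex])
  have card_lex : LCount R (k * m) =
      Nat.card {f : Fin n → Fin k ×ₗ Fin m // ∀ i j, R i j → f i ≤ f j} :=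
    Nat.card_congr <| (Equiv.piCongrRight fun _ => e.toEquiv).subtypeEquiv fun f => by
      simp
  have card_classes (r : CompatRel R) :
      Nat.card {h : Fin n → Fin m // ∀ i j, R i j → r.1 i j → h i ≤ h j} =
        ∏ᶠ c : Quot r.1, LCountOn R {x | Quot.mk r.1 x = c} m := by
    have := Fintype.ofFinite (Quot r.1)
    rw [Nat.card_congr (monotoneOnClassesEquiv R r.2.1), Nat.card_pi, finprod_eq_prod_of_fintype]
    rfl
  rw [card_lex, Nat.card_congr (monotoneLexEquiv R), Nat.card_sigma]
  simp only [Nat.card_prod, card_classes]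

end Compat

section EhrhartPolynomials

theorem LCountOn_zero {n : ℕ} (R : Fin n → Fin n → Prop) {B : Set (Fin n)} (hB : B.Nonempty) :
    LCountOn R B 0 = 0 := by
  have := hB.to_subtype
  rw [LCountOn, Nat.card_eq_zero]
  exact .inl ⟨fun f => (f.1 (Classical.arbitrary B)).elim0⟩

variable {K : Type*} [Field K]

theorem X_dvd_of_eval_natCast_eq_LCountOn {n : ℕ} {R : Fin n → Fin n → Prop} {B : Set (Fin n)}
    (hB : B.Nonempty) {q : K[X]} (hq : ∀ k : ℕ, q.eval (k : K) = LCountOn R B k) : X ∣ q := by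
  rw [X_dvd_iff, coeff_zero_eq_eval_zero, ← Nat.cast_zero, hq, LCountOn_zero R hB]

/-- The polynomial `S_r` whose value at `k` is the number of maps `V → Fin k` adapted to `r`. -/
noncomputable def adaptedPoly (K : Type*) [Field K] {V : Type*} (R r : V → V → Prop) : K[X] :=
  newtonPoly (fun j => Nat.card {g : V → Fin j // IsAdapted R r g ∧ Surjective g})
    (Nat.card (Quot r))

theorem adaptedPoly_eval_natCast [CharZero K] {V : Type*} [Finite V] (R r : V → V → Prop) (k : ℕ) :
    (adaptedPoly K R r).eval (k : K) = Nat.card {g : V → Fin k // IsAdapted R r g} := by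
  have no_surjection (j : ℕ) (hj : Nat.card (Quot r) < j) :
      (Nat.card {g : V → Fin j // IsAdapted R r g ∧ Surjective g} : K) = 0 := by
    have : IsEmpty {g : V → Fin j // IsAdapted R r g ∧ Surjective g} :=
      ⟨fun ⟨g, hg, hsurj⟩ => hj.not_ge (by simpa using hg.card_le hsurj)⟩
    rw [Nat.card_of_isEmpty, Nat.cast_zero]
  rw [adaptedPoly, newtonPoly_eval_natCast _ _ no_surjection,
    card_eq_sum_choose_mul_card_surjective (IsAdapted R r)
      fun e _ => isAdapted_orderEmbedding_comp_iff e]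
  push_cast
  rfl

theorem natDegree_adaptedPoly_le {V : Type*} (R r : V → V → Prop) :
    (adaptedPoly K R r).natDegree ≤ Nat.card (Quot r) :=
  natDegree_newtonPoly_le _ _

variable {n : ℕ}

theorem coeff_adaptedPoly_clRel {R r : Fin n → Fin n → Prop} (hc : Compat R r)
    (hr : Equivalence r) :
    (adaptedPoly K R r).coeff (clRel r) = heapCount (quotLe R r) / (clRel r).factorial := by
  rw [heapCount_quotLe hc hr]
  exact coeff_newtonPoly_self _ _

theorem eval_natCast_mul_eq_sum [CharZero K] (R : Fin n → Fin n → Prop) [Fintype (CompatRel R)]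
    (p : K[X]) (hp : ∀ k : ℕ, p.eval (k : K) = LCount R k)
    (E : Set (Fin n) → K[X])
    (hE : ∀ (B : Set (Fin n)) (k : ℕ), (E B).eval (k : K) = LCountOn R B k) (k m : ℕ) :
    p.eval ((k * m : ℕ) : K) = ∑ r : CompatRel R, (adaptedPoly K R r.1).eval (k : K) *
      (∏ᶠ c : Quot r.1, E {x | Quot.mk r.1 x = c}).eval (m : K) := by
  have (r : Fin n → Fin n → Prop) := Fintype.ofFinite (Quot r)
  rw [hp, LCount_mul]
  simp only [adaptedPoly_eval_natCast, finprod_eq_prod_of_fintype, eval_prod, hE, Nat.cast_sum,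
    Nat.cast_mul, Nat.cast_prod]

theorem ehr_eq_sum_over_compat_general [CharZero K] (R : Fin n → Fin n → Prop)
    (p : K[X]) (hp : ∀ k : ℕ, p.eval (k : K) = LCount R k)
    (E : Set (Fin n) → K[X])
    (hE : ∀ (B : Set (Fin n)) (k : ℕ), (E B).eval (k : K) = LCountOn R B k) :
    p = ∑ᶠ r : CompatRel R,
      C ((heapCount (quotLe R r.1) : K) / (clRel r.1).factorial *
          ∏ᶠ c : Quot r.1, (derivative (E {x | Quot.mk r.1 x = c})).eval 0) *
        X ^ clRel r.1 := by
  have := Fintype.ofFinite (CompatRel R)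
  have X_dvd_E (r : CompatRel R) (c : Quot r.1) : X ∣ E {x | Quot.mk r.1 x = c} :=
    X_dvd_of_eval_natCast_eq_LCountOn (Quot.exists_rep c) (hE _)
  have degree_le (r : CompatRel R) : (adaptedPoly K R r.1).natDegree ≤ clRel r.1 :=
    natDegree_adaptedPoly_le R r.1
  have X_pow_dvd (r : CompatRel R) : X ^ clRel r.1 ∣ ∏ᶠ c : Quot r.1, E {x | Quot.mk r.1 x = c} :=
    X_pow_card_dvd_finprod (X_dvd_E r)
  rw [finsum_eq_sum_of_fintype, eq_sum_C_mul_X_pow_of_eval_natCast_mul Finset.univ p _ _ _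
    (eval_natCast_mul_eq_sum R p hp E hE) (fun r _ => degree_le r) fun r _ => X_pow_dvd r]
  refine Finset.sum_congr rfl fun r _ => ?_
  rw [coeff_adaptedPoly_clRel r.2.2 r.2.1, clRel, coeff_card_finprod (X_dvd_E r)]

end EhrhartPolynomials

/-- `ehr_P(X) = Σ_{~ ◁ P} (μ_{P/~} / cl(~)!) · (Π_C ehr'_{P|C}(0)) · X^{cl(~)}`. -/
theorem ehr_eq_sum_over_compat {n : ℕ} (le : Fin n → Fin n → Prop)
    (hrefl : ∀ i, le i i)
    (htrans : ∀ i j k, le i j → le j k → le i k)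
    (p : ℚ[X]) (hp : ∀ k : ℕ, p.eval (k : ℚ) = LCount le k)
    (E : Set (Fin n) → ℚ[X])
    (hE : ∀ (B : Set (Fin n)) (k : ℕ), (E B).eval (k : ℚ) = LCountOn le B k) :
    p = ∑ᶠ r : {r : Fin n → Fin n → Prop // Equivalence r ∧ Compat le r},
      Polynomial.C ((heapCount (quotLe le r.1) : ℚ) / (Nat.factorial (clRel r.1)) *
          ∏ᶠ c : Quot r.1,
            (Polynomial.derivative (E {x | Quot.mk r.1 x = c})).eval 0) *
        Polynomial.X ^ (clRel r.1) :=
  ehr_eq_sum_over_compat_general le p hp E hE
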